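/- Under the hypotheses of the a posteriori theorem (C^r map F in parabolic form with H1, H2, H3 and approximate solutions K^≤, R), let P be the Taylor polynomial of F at 0 of degree ℓ−1, let S_δ(x,y) = (x, δy) and set P̃ = S_δ^{-1}∘P∘S_δ, K̃^≤ = S_δ^{-1}∘K^≤. Then for any B > B_p there exist ρ, δ > 0 small enough such that ‖(DP̃)^{-1}(K̃^≤(x))‖ ≤ 1 + B‖x‖^{N−1} for all x ∈ V_ρ, where ℝ^{n+m} carries the norm ‖(x,y)‖ = max{‖x‖, ‖y‖}. -/

import Mathlib

open Metric Set Filter Asymptotics Topology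

noncomputable section

section Defs

variable {E F G : Type*} [NormedAddCommGroup E] [NormedSpace ℝ E]
  [NormedAddCommGroup F] [NormedSpace ℝ F] [NormedAddCommGroup G] [NormedSpace ℝ G]

/-- `p` is (the diagonal of) a continuous homogeneous polynomial map of degree `N`. -/
def IsHomogPoly (N : ℕ) (p : E → G) : Prop :=
  ∃ P : ContinuousMultilinearMap ℝ (fun _ : Fin N => E) G, ∀ x, p x = P fun _ => x

/-- positively homogeneous function of degree `j`. -/
def IsHomogFun (j : ℕ) (f : E → G) : Prop :=
  ∀ t : ℝ, 0 < t → ∀ x : E, f (t • x) = t ^ j • f x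

/-- `V` is star-shaped with respect to the origin: `0 ∈ ∂V` and `t • x ∈ V` for `x ∈ V`,
`t ∈ (0,1)`. -/
def StarShaped0 (V : Set E) : Prop :=
  0 ∈ frontier V ∧ ∀ x ∈ V, ∀ t : ℝ, t ∈ Set.Ioo (0 : ℝ) 1 → t • x ∈ V

/-- `V_ρ = V ∩ B_ρ`. -/
def Vrho (V : Set E) (ρ : ℝ) : Set E := V ∩ ball 0 ρ

/-- `h(x) = O(‖x‖^k)` on the set `S` (real exponent, global constant). -/
def BigOOn (h : E → G) (S : Set E) (k : ℝ) : Prop :=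
  ∃ C : ℝ, ∀ x ∈ S, ‖h x‖ ≤ C * ‖x‖ ^ k

/-- The constant `a_p`. -/
def apC (p : E × F → E) (V : Set E) (ρ : ℝ) (N : ℕ) : ℝ :=
  -sSup ((fun x : E => (‖x + p (x, 0)‖ - ‖x‖) / ‖x‖ ^ N) '' Vrho V ρ)

/-- The constant `b_p`. -/
def bpC (p : E × F → E) (V : Set E) (ρ : ℝ) (N : ℕ) : ℝ :=
  sSup ((fun x : E => ‖p (x, 0)‖ / ‖x‖ ^ N) '' Vrho V ρ)

/-- The constant `A_p`. -/
def ApC (p : E × F → E) (V : Set E) (ρ : ℝ) (N : ℕ) : ℝ :=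
  -sSup ((fun x : E =>
      (‖ContinuousLinearMap.id ℝ E + fderiv ℝ (fun z : E => p (z, 0)) x‖ - 1) / ‖x‖ ^ (N - 1))
    '' Vrho V ρ)

/-- The constant `B_p`. -/
def BpC (p : E × F → E) (V : Set E) (ρ : ℝ) (N : ℕ) : ℝ :=
  sSup ((fun x : E =>
      (‖ContinuousLinearMap.id ℝ E - fderiv ℝ (fun z : E => p (z, 0)) x‖ - 1) / ‖x‖ ^ (N - 1))
    '' Vrho V ρ)

/-- The constant `B_q`. -/
def BqC (q : E × F → F) (V : Set E) (ρ : ℝ) (M : ℕ) : ℝ :=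
  -sSup ((fun x : E =>
      (‖ContinuousLinearMap.id ℝ F - fderiv ℝ (fun y : F => q (x, y)) 0‖ - 1) / ‖x‖ ^ (M - 1))
    '' Vrho V ρ)

/-- The constant `c_p`. -/
def cpC (p : E × F → E) (q : E × F → F) (V : Set E) (ρ : ℝ) (N M : ℕ) : ℝ :=
  if BqC q V ρ M ≤ 0 then apC p V ρ N else bpC p V ρ N

/-- The constant `d_p`. -/
def dpC (p : E × F → E) (V : Set E) (ρ : ℝ) (N : ℕ) : ℝ :=
  if ApC p V ρ N ≤ 0 then apC p V ρ N else bpC p V ρ N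

/-- `η = 1 + N - L`, `L = min{N,M}`. -/
def etaC (N M : ℕ) : ℝ := 1 + (N : ℝ) - (min N M : ℝ)

/-- `ℓ₀ = N - 1 + B_p/a_p + max{η - A_p/d_p, 0}`. -/
def ell0C (p : E × F → E) (V : Set E) (ρ : ℝ) (N M : ℕ) : ℝ :=
  (N : ℝ) - 1 + BpC p V ρ N / apC p V ρ N + max (etaC N M - ApC p V ρ N / dpC p V ρ N) 0

/-- `ℓ̃ = N - 1 + B_p/a_p + (η - 1)`. -/
def elltC (p : E × F → E) (V : Set E) (ρ : ℝ) (N M : ℕ) : ℝ :=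
  (N : ℝ) - 1 + BpC p V ρ N / apC p V ρ N + (etaC N M - 1)

/-- The optimal constant in hypothesis H3. -/
def CIC (p : E × F → E) (V : Set E) (ρ : ℝ) (N : ℕ) : ℝ :=
  sInf ((fun x : E => infDist (x + p (x, 0)) (Vrho V ρ)ᶜ / ‖x‖ ^ N) '' Vrho V ρ)

/-- Hypothesis H1. -/
def HypH1 (p : E × F → E) (V : Set E) (ρ : ℝ) (N : ℕ) : Prop := 0 < apC p V ρ N

/-- Hypothesis H2. -/
def HypH2 (p : E × F → E) (q : E × F → F) (V : Set E) (ρ : ℝ) (N M : ℕ) : Prop :=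
  (∀ x ∈ Vrho V ρ, q (x, 0) = 0) ∧
  (M < N → 0 < BqC q V ρ M) ∧ (M = N → -(N : ℝ) * apC p V ρ N < BqC q V ρ M)

/-- Hypothesis H3. -/
def HypH3 (p : E × F → E) (V : Set E) (ρ : ℝ) (N : ℕ) : Prop :=
  ∃ C > (0 : ℝ), ∀ x ∈ Vrho V ρ, C * ‖x‖ ^ N ≤ infDist (x + p (x, 0)) (Vrho V ρ)ᶜ

/-- Hypothesis H1'. -/
def HypH1' (p : E × F → E) (V : Set E) (ρ : ℝ) (N M : ℕ) : Prop :=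
  0 < apC p V ρ N ∧ (N < M → -1 < ApC p V ρ N / dpC p V ρ N)

/-- Hypothesis H2'. -/
def HypH2' (p : E × F → E) (q : E × F → F) (V : Set E) (ρ : ℝ) (N M : ℕ) : Prop :=
  (∀ x ∈ Vrho V ρ, q (x, 0) = 0) ∧
  (M < N → 0 < BqC q V ρ M) ∧
  (M = N → max (1 - ApC p V ρ N / dpC p V ρ N) 0 < 2 + BqC q V ρ M / cpC p q V ρ N M)

/-- `F` is in parabolic form of degrees `(N, M)` on `U`. -/
def ParabolicForm (U : Set (E × F)) (Fm : E × F → E × F) (p : E × F → E) (q : E × F → F)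
    (N M : ℕ) : Prop :=
  2 ≤ N ∧ 2 ≤ M ∧ IsHomogPoly N p ∧ IsHomogPoly M q ∧
    (fun z : E × F => (Fm z).1 - z.1 - p z) =O[𝓝[U] 0] (fun z : E × F => ‖z‖ ^ (N + 1)) ∧
    (fun z : E × F => (Fm z).2 - z.2 - q z) =O[𝓝[U] 0] (fun z : E × F => ‖z‖ ^ (M + 1))

/-- The local stable set `W^s_{V,ρ}` of the origin. -/
def stableSetLoc (Fm : E × F → E × F) (U : Set (E × F)) (V : Set E) (ρ : ℝ) : Set (E × F) :=
  {z ∈ U | (∀ k : ℕ, (Fm^[k] z).1 ∈ Vrho V ρ) ∧ Tendsto (fun k => Fm^[k] z) atTop (𝓝 0)}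

/-- `f` is `C¹` at the origin in the sense of the paper (Definition 2.3). -/
def C1AtOrigin (f : E → G) (S : Set E) : Prop :=
  (∃ ε > (0 : ℝ), ContDiffOn ℝ 1 f ((S ∩ ball 0 ε) \ {0})) ∧
  ∃ L : E →L[ℝ] G, Tendsto (fun x => fderivWithin ℝ f S x) (𝓝[S \ {0}] 0) (𝓝 L)

/-- `c < r` where `r` is an extended natural smoothness exponent. -/
def ltSmooth (c : ℝ) (r : ℕ∞) : Prop := ∃ k : ℕ, c < (k : ℝ) ∧ (k : ℕ∞) ≤ r

/-- The regularity degree `r_d`. -/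
def rdC (p : E × F → E) (V : Set E) (ρ : ℝ) (N M : ℕ) (r : ℕ) : ℕ :=
  sSup {k : ℕ |
    (etaC N M - ApC p V ρ N / dpC p V ρ N) * k < (r : ℝ) - BpC p V ρ N / apC p V ρ N - N + 1}

/-- The regularity degree `r_f` of the formal approximation. -/
def rfC (p : E × F → E) (q : E × F → F) (V : Set E) (ρ : ℝ) (N M : ℕ) : ℕ :=
  if M = N then
    sSup {k : ℕ | (1 - ApC p V ρ N / dpC p V ρ N) * k < 2 + BqC q V ρ M / cpC p q V ρ N M}
  else sSup {k : ℕ | (1 - ApC p V ρ N / dpC p V ρ N) * k < 2}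

end Defs

section Scaling

/-- The Taylor polynomial of degree `d` of `f` at the origin. -/
def taylorPoly0 {G G' : Type*} [NormedAddCommGroup G] [NormedSpace ℝ G]
    [NormedAddCommGroup G'] [NormedSpace ℝ G'] (f : G → G') (d : ℕ) (z : G) : G' :=
  ∑ j ∈ Finset.range (d + 1), ((j.factorial : ℝ))⁻¹ • iteratedFDeriv ℝ j f 0 fun _ => z

/-- The scaling `S_δ(x, y) = (x, δ y)`. -/
def scaleY {E F : Type*} [NormedAddCommGroup E] [NormedSpace ℝ E]
    [NormedAddCommGroup F] [NormedSpace ℝ F] (δ : ℝ) (z : E × F) : E × F :=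
  (z.1, δ • z.2)

end Scaling

/-!
Write `P` for the Taylor polynomial of `F`. Along `K x = (x,0) + O(‖x‖²)`, its derivative agrees
with that of the normal form `(x + p, y + q)` at `(x,0)` up to `O(‖x‖^N)` in the first row and
`O(‖x‖^M)` in the second, because the derivative of an analytic remainder loses exactly one order.
The scaling `S_δ` multiplies the coupling `D_y p(x,0) = O(‖x‖^(N-1))` by `δ`, while
`D_x q(x,0) = 0`; hence, in the max norm, each row of the conjugated derivative is dominated by its
diagonal block `id + D_x p` or `id + D_y q`. To second order the inverses of these blocks are
`id - D_x p` and `id - D_y q`, whose norms are at most `1 + B_p ‖x‖^(N-1)` and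
`1 - B_q ‖x‖^(M-1)`. Euler's identity gives `N a_p ≤ B_p`, so by H2 the second row also expands by
at most `1 + B ‖x‖^(N-1)` whenever `B > B_p`; for `N < M` the term `q` is itself part of the
remainder.
-/

section Analytic

lemma tendsto_norm_pow_zero {X : Type*} [SeminormedAddCommGroup X] {l : Filter X} (hl : l ≤ 𝓝 0)
    {k : ℕ} (hk : k ≠ 0) : Tendsto (fun x => ‖x‖ ^ k) l (𝓝 0) := by
  have continuous_pow : Continuous fun x : X => ‖x‖ ^ k := by fun_prop
  exact (continuous_pow.tendsto' 0 0 (by rw [norm_zero, zero_pow hk])).mono_left hl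

lemma norm_pow_isBigO_norm_pow {X : Type*} [SeminormedAddCommGroup X] {k n : ℕ} (h : k ≤ n) :
    (fun z : X => ‖z‖ ^ n) =O[𝓝 0] fun z : X => ‖z‖ ^ k := by
  rcases h.eq_or_lt with rfl | h
  · exact isBigO_refl _ _
  · exact (isLittleO_norm_pow_norm_pow h).isBigO

variable {X Y : Type*} [NormedAddCommGroup X] [NormedSpace ℝ X]
  [NormedAddCommGroup Y] [NormedSpace ℝ Y]

lemma apply_diag_eq_zero_of_isBigO {f : X → Y} {P : FormalMultilinearSeries ℝ X Y} {x : X}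
    (hf : HasFPowerSeriesAt f P x) {k : ℕ}
    (hO : (fun y => f (x + y)) =O[𝓝 0] fun y => ‖y‖ ^ k) {j : ℕ} (hj : j < k) (y : X) :
    (P j fun _ => y) = 0 := by
  induction j using Nat.strong_induction_on generalizing y with
  | _ j ih =>
    have partialSum_eq : P.partialSum (j + 1) = fun y => P j fun _ => y := by
      funext z
      refine Finset.sum_eq_single j (fun i hi hij => ?_) fun hj => ?_
      · have hij : i < j := (Finset.mem_range_succ_iff.1 hi).lt_of_ne hij
        exact ih i hij (hij.trans hj) z
      · exact absurd (Finset.self_mem_range_succ j) hj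
    have remainder := hf.isBigO_sub_partialSum_pow (j + 1)
    rw [partialSum_eq] at remainder
    have leading : (fun y => P j fun _ => y) =O[𝓝 0] fun y => ‖y‖ ^ (j + 1) := by
      simpa using (hO.trans (norm_pow_isBigO_norm_pow hj)).sub remainder
    exact leading.continuousMultilinearMap_apply_eq_zero y

/-- The low-order terms vanish on the diagonal, but, not being assumed symmetric, they need not
vanish as multilinear maps: hence the passage to another power series. -/
lemma exists_hasFPowerSeriesAt_of_isBigO {f : X → Y} {x : X} (hf : AnalyticAt ℝ f x) {k : ℕ}
    (hO : (fun y => f (x + y)) =O[𝓝 0] fun y => ‖y‖ ^ k) :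
    ∃ P : FormalMultilinearSeries ℝ X Y, HasFPowerSeriesAt f P x ∧ ∀ j < k, P j = 0 := by
  obtain ⟨P, r, hP⟩ := hf
  have diag_eq_zero {j : ℕ} (hj : j < k) (y : X) : (P j fun _ => y) = 0 :=
    apply_diag_eq_zero_of_isBigO hP.hasFPowerSeriesAt hO hj y
  refine ⟨fun j => if j < k then 0 else P j, ⟨r, ?_, hP.r_pos, fun {y} hy => ?_⟩,
    fun j hj => if_pos hj⟩
  · refine hP.r_le.trans (FormalMultilinearSeries.radius_le_of_le fun j => ?_)
    split_ifs
    · simp only [norm_zero, norm_nonneg]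
    · exact le_rfl
  · refine (hP.hasSum hy).congr_fun fun j => ?_
    split_ifs with hj
    · exact (diag_eq_zero hj y).symm
    · rfl

lemma fderiv_isBigO_of_isBigO [CompleteSpace Y] {f : X → Y} {x : X} (hf : AnalyticAt ℝ f x)
    {k : ℕ} (hO : (fun y => f (x + y)) =O[𝓝 0] fun y => ‖y‖ ^ (k + 1)) :
    (fun y => fderiv ℝ f (x + y)) =O[𝓝 0] fun y => ‖y‖ ^ k := by
  obtain ⟨P, ⟨r, hP⟩, hP0⟩ := exists_hasFPowerSeriesAt_of_isBigO hf hO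
  have partialSum_eq (y : X) : P.derivSeries.partialSum k y = 0 := by
    refine Finset.sum_eq_zero fun j hj => ?_
    rw [P.derivSeries_eq_zero (hP0 (j + 1) (by simpa using hj))]
    rfl
  simpa only [partialSum_eq, sub_zero] using
    hP.fderiv.hasFPowerSeriesAt.isBigO_sub_partialSum_pow k

end Analytic

section HomogeneousPolynomials

variable {X Y Z : Type*} [NormedAddCommGroup X] [NormedSpace ℝ X]
  [NormedAddCommGroup Y] [NormedSpace ℝ Y] [NormedAddCommGroup Z] [NormedSpace ℝ Z]

lemma hasFDerivAt_multilinear_diag {j : ℕ}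
    (P : ContinuousMultilinearMap ℝ (fun _ : Fin j => X) Y) (x : X) :
    HasFDerivAt (fun z => P fun _ => z)
      ((P.linearDeriv fun _ => x).comp (.pi fun _ => .id ℝ X)) x :=
  (P.hasFDerivAt fun _ => x).comp x (hasFDerivAt_pi.2 fun _ => hasFDerivAt_id x)

namespace IsHomogPoly

variable {j : ℕ} {g : X → Y}

lemma zero : IsHomogPoly j (fun _ : X => (0 : Y)) := ⟨0, fun _ => rfl⟩

lemma clm_comp (hg : IsHomogPoly j g) (L : Y →L[ℝ] Z) : IsHomogPoly j (fun z => L (g z)) := by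
  obtain ⟨P, hP⟩ := hg
  exact ⟨L.compContinuousMultilinearMap P, fun z => congrArg L (hP z)⟩

lemma comp_clm (hg : IsHomogPoly j g) (L : Z →L[ℝ] X) : IsHomogPoly j (fun z => g (L z)) := by
  obtain ⟨P, hP⟩ := hg
  exact ⟨P.compContinuousLinearMap fun _ => L, fun z => hP (L z)⟩

lemma contDiff (hg : IsHomogPoly j g) {n : WithTop ℕ∞} : ContDiff ℝ n g := by
  obtain ⟨P, hP⟩ := hg
  rw [funext hP]
  exact P.contDiff.comp (contDiff_pi.2 fun _ => contDiff_id)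

lemma differentiable (hg : IsHomogPoly j g) : Differentiable ℝ g :=
  (hg.contDiff (n := 1)).differentiable one_ne_zero

lemma exists_norm_le (hg : IsHomogPoly j g) :
    ∃ C : ℝ, 0 ≤ C ∧ ∀ z, ‖g z‖ ≤ C * ‖z‖ ^ j := by
  obtain ⟨P, hP⟩ := hg
  refine ⟨‖P‖, norm_nonneg P, fun z => ?_⟩
  simpa only [hP, Finset.prod_const, Finset.card_univ, Fintype.card_fin] using
    P.le_opNorm fun _ => z

lemma isBigO (hg : IsHomogPoly j g) (l : Filter X) : g =O[l] fun z => ‖z‖ ^ j := by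
  obtain ⟨C, -, hC⟩ := hg.exists_norm_le
  exact .of_bound C (.of_forall fun z => by simpa only [norm_pow, norm_norm] using hC z)

lemma exists_norm_sub_le (hg : IsHomogPoly j g) :
    ∃ C : ℝ, ∀ z w, ‖g z - g w‖ ≤ C * (max ‖z‖ ‖w‖ ^ (j - 1) * ‖z - w‖) := by
  obtain ⟨P, hP⟩ := hg
  refine ⟨‖P‖ * j, fun z w => ?_⟩
  have diag_norm_le (v : X) : ‖fun _ : Fin j => v‖ ≤ ‖v‖ := pi_norm_const_le v
  calc ‖g z - g w‖
      ≤ ‖P‖ * j * max ‖fun _ : Fin j => z‖ ‖fun _ : Fin j => w‖ ^ (j - 1)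
          * ‖fun _ : Fin j => z - w‖ := by
        have image_sub_le := P.norm_image_sub_le (fun _ => z) (fun _ => w)
        rwa [Fintype.card_fin, ← hP, ← hP] at image_sub_le
    _ ≤ ‖P‖ * j * max ‖z‖ ‖w‖ ^ (j - 1) * ‖z - w‖ := by gcongr <;> exact diag_norm_le _
    _ = ‖P‖ * j * (max ‖z‖ ‖w‖ ^ (j - 1) * ‖z - w‖) := mul_assoc _ _ _

protected lemma fderiv (hg : IsHomogPoly j g) : IsHomogPoly (j - 1) (fderiv ℝ g) := by
  obtain ⟨P, hP⟩ := hg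
  rw [funext hP]
  cases j with
  | zero =>
    refine ⟨0, fun x => ?_⟩
    ext v
    simp [(hasFDerivAt_multilinear_diag P x).fderiv, ContinuousMultilinearMap.linearDeriv_apply]
  | succ j =>
    refine ⟨∑ i, (P.curryMid i).flipMultilinear, fun x => ?_⟩
    ext v
    have insertNth_eq (i : Fin (j + 1)) :
        i.insertNth v (fun _ => x) = Function.update (fun _ => x) i v :=
      Fin.insertNth_removeNth i v fun _ => x
    simp [(hasFDerivAt_multilinear_diag P x).fderiv, ContinuousMultilinearMap.linearDeriv_apply,
      insertNth_eq]

lemma fderiv_apply_self (hg : IsHomogPoly j g) (x : X) : fderiv ℝ g x x = (j : ℝ) • g x := by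
  obtain ⟨P, hP⟩ := hg
  rw [funext hP, (hasFDerivAt_multilinear_diag P x).fderiv]
  simp [ContinuousMultilinearMap.linearDeriv_apply, Nat.cast_smul_eq_nsmul]

end IsHomogPoly

end HomogeneousPolynomials

section Taylor

variable {X Y : Type*} [NormedAddCommGroup X] [NormedSpace ℝ X]
  [NormedAddCommGroup Y] [NormedSpace ℝ Y]

lemma contDiff_taylorPoly0 (f : X → Y) (d : ℕ) {n : WithTop ℕ∞} :
    ContDiff ℝ n (taylorPoly0 f d) :=
  ContDiff.sum fun j _ => contDiff_const.smul
    (IsHomogPoly.contDiff ⟨iteratedFDeriv ℝ j f 0, fun _ => rfl⟩)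

lemma norm_sub_taylorPoly0_le [CompleteSpace Y] {f : X → Y} {n : ℕ} {C : ℝ} {z : X}
    (hf : ∀ t ∈ Icc (0 : ℝ) 1, ContDiffAt ℝ (n + 1) f (t • z))
    (hC : ∀ t ∈ Icc (0 : ℝ) 1, ‖iteratedFDeriv ℝ (n + 1) f (t • z)‖ ≤ C) :
    ‖f z - taylorPoly0 f n z‖ ≤ C * ‖z‖ ^ (n + 1) := by
  have remainder : f z - taylorPoly0 f n z = (n.factorial : ℝ)⁻¹ •
      ∫ t in (0 : ℝ)..1, (1 - t) ^ n • iteratedFDeriv ℝ (n + 1) f (t • z) fun _ => z := by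
    have taylor := map_add_eq_sum_add_integral_iteratedFDeriv (f := f) (x := 0) (y := z) (n := n)
      (fun t ht => by simpa only [zero_add] using hf t ht)
    simp only [zero_add] at taylor
    rw [taylor, taylorPoly0, add_sub_cancel_left]
  have integrand_le : ∀ t ∈ uIoc (0 : ℝ) 1,
      ‖(1 - t) ^ n • iteratedFDeriv ℝ (n + 1) f (t • z) fun _ => z‖ ≤ C * ‖z‖ ^ (n + 1) := by
    intro t ht
    rw [uIoc_of_le zero_le_one] at ht
    have weight_le : ‖(1 - t) ^ n‖ ≤ 1 := by
      rw [norm_pow, Real.norm_of_nonneg (sub_nonneg.2 ht.2)]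
      exact pow_le_one₀ (sub_nonneg.2 ht.2) (by linarith [ht.1])
    have deriv_le := (iteratedFDeriv ℝ (n + 1) f (t • z)).le_of_opNorm_le
      (hC t ⟨ht.1.le, ht.2⟩) fun _ => z
    rw [Finset.prod_const, Finset.card_univ, Fintype.card_fin] at deriv_le
    rw [norm_smul]
    exact (mul_le_of_le_one_left (norm_nonneg _) weight_le).trans deriv_le
  have integral_le := intervalIntegral.norm_integral_le_of_norm_le_const integrand_le
  rw [sub_zero, abs_one, mul_one] at integral_le
  have factorial_inv_le : ‖(n.factorial : ℝ)⁻¹‖ ≤ 1 := by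
    rw [norm_inv, Real.norm_natCast]
    exact inv_le_one_of_one_le₀ (mod_cast n.factorial_pos)
  rw [remainder, norm_smul]
  exact (mul_le_of_le_one_left (norm_nonneg _) factorial_inv_le).trans integral_le

lemma isBigO_sub_taylorPoly0 [CompleteSpace Y] {f : X → Y} {n : ℕ}
    (hf : ContDiffAt ℝ (n + 1) f 0) :
    (fun z => f z - taylorPoly0 f n z) =O[𝓝 0] fun z => ‖z‖ ^ (n + 1) := by
  have smooth : ∀ᶠ z in 𝓝 (0 : X), ContDiffAt ℝ (n + 1) f z :=
    hf.eventually (mod_cast ENat.natCast_ne_top (n + 1))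
  have bounded : ∀ᶠ z in 𝓝 (0 : X),
      ‖iteratedFDeriv ℝ (n + 1) f z‖ < ‖iteratedFDeriv ℝ (n + 1) f 0‖ + 1 :=
    (hf.iteratedFDeriv_right (i := n + 1) (m := 0) (by simp)).continuousAt.norm.eventually
      (gt_mem_nhds (lt_add_one _))
  obtain ⟨ε, hε, hball⟩ := Metric.eventually_nhds_iff_ball.1 (smooth.and bounded)
  refine .of_bound (‖iteratedFDeriv ℝ (n + 1) f 0‖ + 1) ?_
  filter_upwards [ball_mem_nhds (0 : X) hε] with z hz
  have segment (t : ℝ) (ht : t ∈ Icc (0 : ℝ) 1) : t • z ∈ ball (0 : X) ε :=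
    (convex_ball 0 ε).smul_mem_of_zero_mem (mem_ball_self hε) hz ht
  rw [norm_pow, norm_norm]
  exact norm_sub_taylorPoly0_le (fun t ht => (hball _ (segment t ht)).1)
    fun t ht => (hball _ (segment t ht)).2.le

end Taylor

section Remainder

variable {α X Y : Type*} [NormedAddCommGroup X] [NormedSpace ℝ X]
  [NormedAddCommGroup Y] [NormedSpace ℝ Y] {l : Filter α}

lemma IsHomogPoly.isBigO_sub {j : ℕ} {g : X → Y} (hg : IsHomogPoly j g) {z w : α → X}
    (hz : z =O[l] w) :
    (fun a => g (z a) - g (w a)) =O[l] fun a => ‖w a‖ ^ (j - 1) * ‖z a - w a‖ := by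
  obtain ⟨C, hC⟩ := hg.exists_norm_sub_le
  have max_isBigO : (fun a => max ‖z a‖ ‖w a‖) =O[l] fun a => ‖w a‖ := by
    obtain ⟨A, hA⟩ := hz.bound
    refine .of_bound (max A 1) ?_
    filter_upwards [hA] with a ha
    rw [Real.norm_of_nonneg (by positivity), norm_norm]
    exact max_le (ha.trans (by gcongr; exact le_max_left _ _))
      (le_mul_of_one_le_left (norm_nonneg _) (le_max_right _ _))
  refine (IsBigO.of_bound C (.of_forall fun a => ?_)).trans
    ((max_isBigO.pow (j - 1)).mul (isBigO_refl _ _))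
  rw [Real.norm_of_nonneg (by positivity)]
  exact hC _ _

lemma fderiv_sub_isBigO_of_isBigO [CompleteSpace Y] {f g : X → Y} {k : ℕ} (hk : 2 ≤ k)
    (hf : AnalyticAt ℝ f 0) (hg : IsHomogPoly k g) (A : X →L[ℝ] Y)
    (hO : (fun z => f z - A z - g z) =O[𝓝 0] fun z => ‖z‖ ^ (k + 1))
    {z w : α → X} (hw : Tendsto w l (𝓝 0))
    (hzw : (fun a => z a - w a) =O[l] fun a => ‖w a‖ ^ 2) :
    (fun a => fderiv ℝ f (z a) - A - fderiv ℝ g (w a)) =O[l] fun a => ‖w a‖ ^ k := by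
  have z_isBigO : z =O[l] w := by
    have sub_isBigO : (fun a => z a - w a) =O[l] w := hzw.trans <|
      ((norm_pow_isBigO_norm_pow one_le_two).comp_tendsto hw).trans
        (by simpa [Function.comp_def] using (isBigO_refl w l))
    simpa only [sub_add_cancel] using sub_isBigO.add (isBigO_refl w l)
  have hz : Tendsto z l (𝓝 0) := z_isBigO.trans_tendsto hw
  have remainder_isBigO :
      (fun y => fderiv ℝ (fun z => f z - A z - g z) y) =O[𝓝 0] fun y => ‖y‖ ^ k := by
    have analytic : AnalyticAt ℝ (fun z => f z - A z - g z) 0 :=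
      (hf.sub (A.analyticAt 0)).sub hg.contDiff.contDiffAt.analyticAt
    simpa only [zero_add] using
      fderiv_isBigO_of_isBigO analytic (by simpa only [zero_add] using hO)
  have fderiv_remainder : ∀ᶠ y in 𝓝 (0 : X),
      fderiv ℝ (fun z => f z - A z - g z) y = fderiv ℝ f y - A - fderiv ℝ g y := by
    filter_upwards [hf.eventually_analyticAt] with y hy
    exact ((hy.differentiableAt.hasFDerivAt.sub A.hasFDerivAt).sub
      (hg.differentiable y).hasFDerivAt).fderiv
  have at_z : (fun a => fderiv ℝ f (z a) - A - fderiv ℝ g (z a)) =O[l] fun a => ‖w a‖ ^ k :=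
    ((remainder_isBigO.congr' fderiv_remainder .rfl).comp_tendsto hz).trans
      (z_isBigO.norm_norm.pow k)
  have variation : (fun a => fderiv ℝ g (z a) - fderiv ℝ g (w a)) =O[l] fun a => ‖w a‖ ^ k := by
    refine (hg.fderiv.isBigO_sub z_isBigO).trans ?_
    have exponent_eq : k - 1 - 1 + 2 = k := by lia
    simpa only [← pow_add, exponent_eq] using
      (isBigO_refl (fun a => ‖w a‖ ^ (k - 1 - 1)) l).mul hzw.norm_left
  simpa only [sub_add_sub_cancel] using at_z.add variation

end Remainder

section NormalizedSup

variable {X : Type*} [SeminormedAddCommGroup X] {S : Set X} {f : X → ℝ} {k : ℕ}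

lemma le_sSup_div_norm_pow_mul {C : ℝ} (hC : 0 ≤ C) (hf : ∀ x, f x ≤ C * ‖x‖ ^ k)
    {x : X} (hx : x ∈ S) (hx0 : ‖x‖ ≠ 0) :
    f x ≤ sSup ((fun y => f y / ‖y‖ ^ k) '' S) * ‖x‖ ^ k := by
  have pow_pos : 0 < ‖x‖ ^ k := pow_pos (lt_of_le_of_ne (norm_nonneg x) hx0.symm) k
  refine (div_le_iff₀ pow_pos).1 (le_csSup ⟨C, ?_⟩ (mem_image_of_mem _ hx))
  rintro _ ⟨y, -, rfl⟩
  exact div_le_of_le_mul₀ (by positivity) hC (hf y)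

end NormalizedSup

section PerturbedIdentity

variable {α X W : Type*} [NormedAddCommGroup X] [NormedSpace ℝ X]
  [NormedAddCommGroup W] [NormedSpace ℝ W]

/-- Applying `id - P` to `u + P u + R w` recovers `u` up to the terms `P (P u)` and
`(id - P) (R w)`, so `id - P` plays the role of the inverse of `id + P`. -/
lemma norm_le_mul_norm_add_add (P : X →L[ℝ] X) (R : W →L[ℝ] X) {c : ℝ}
    (hκ : ‖P‖ ^ 2 + ‖.id ℝ X - P‖ * ‖R‖ < 1)
    (hc : ‖.id ℝ X - P‖ ≤ c * (1 - (‖P‖ ^ 2 + ‖.id ℝ X - P‖ * ‖R‖)))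
    {u : X} {w : W} (hwu : ‖w‖ ≤ ‖u‖) :
    ‖u‖ ≤ c * ‖u + P u + R w‖ := by
  set Q := ContinuousLinearMap.id ℝ X - P with hQ
  have u_eq : u = Q (u + P u + R w) + P (P u) - Q (R w) := by
    simp only [hQ, map_add, sub_apply, ContinuousLinearMap.id_apply]
    abel
  have norm_u_le : ‖u‖ ≤ ‖Q‖ * ‖u + P u + R w‖ + (‖P‖ ^ 2 + ‖Q‖ * ‖R‖) * ‖u‖ := calc
    ‖u‖ ≤ ‖Q (u + P u + R w)‖ + ‖P (P u)‖ + ‖Q (R w)‖ := by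
        conv_lhs => rw [u_eq]
        exact (norm_sub_le _ _).trans (by gcongr; exact norm_add_le _ _)
    _ ≤ ‖Q‖ * ‖u + P u + R w‖ + ‖P‖ * (‖P‖ * ‖u‖) + ‖Q‖ * (‖R‖ * ‖u‖) := by
        gcongr
        · exact Q.le_opNorm _
        · exact P.le_opNorm_of_le (P.le_opNorm u)
        · exact Q.le_opNorm_of_le (R.le_opNorm_of_le hwu)
    _ = _ := by ring
  have absorbed := norm_u_le.trans
    (add_le_add_left (mul_le_mul_of_nonneg_right hc (norm_nonneg _)) _)
  refine le_of_mul_le_mul_left ?_ (sub_pos.2 hκ)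
  linarith

lemma eventually_norm_le_mul_norm_add_add {l : Filter α} {s : α → ℝ} (hs : Tendsto s l (𝓝 0))
    (hs0 : ∀ a, 0 ≤ s a) {P : α → X →L[ℝ] X} {R : α → W →L[ℝ] X} (hP : P =O[l] s)
    {b ε β : ℝ} (hQ : ∀ᶠ a in l, ‖.id ℝ X - P a‖ ≤ 1 + b * s a)
    (hR : ∀ᶠ a in l, ‖R a‖ ≤ ε * s a) (hβ : b + ε < β) :
    ∀ᶠ a in l, ∀ (u : X) (w : W), ‖w‖ ≤ ‖u‖ →
      ‖u‖ ≤ (1 + β * s a) * ‖u + P a u + R a w‖ := by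
  obtain ⟨C, hC⟩ := hP.bound
  have defect_tendsto : Tendsto
      (fun a => (C ^ 2 * s a + (1 + b * s a) * ε) * (1 + β * s a)) l (𝓝 ε) := by
    have affine (t : ℝ) : Tendsto (fun a => 1 + t * s a) l (𝓝 1) := by
      simpa using (hs.const_mul t).const_add 1
    simpa using ((hs.const_mul (C ^ 2)).add ((affine b).mul_const ε)).mul (affine β)
  have κ_tendsto : Tendsto (fun a => (C ^ 2 * s a + (1 + b * s a) * ε) * s a) l (𝓝 0) := by
    simpa using ((hs.const_mul (C ^ 2)).add
      (((hs.const_mul b).const_add 1).mul_const ε)).mul hs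
  have affine_pos : ∀ᶠ a in l, 0 < 1 + β * s a :=
    (show Tendsto (fun a => 1 + β * s a) l (𝓝 1) by
      simpa using (hs.const_mul β).const_add 1).eventually (lt_mem_nhds one_pos)
  filter_upwards [hC, hQ, hR, affine_pos, κ_tendsto.eventually (gt_mem_nhds one_pos),
    defect_tendsto.eventually (gt_mem_nhds (lt_sub_iff_add_lt'.2 hβ))]
    with a hPa hQa hRa hpos hκ hdefect u w hwu
  rw [Real.norm_of_nonneg (hs0 a)] at hPa
  have κ_le : ‖P a‖ ^ 2 + ‖.id ℝ X - P a‖ * ‖R a‖ ≤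
      (C ^ 2 * s a + (1 + b * s a) * ε) * s a := calc
    _ ≤ (C * s a) ^ 2 + (1 + b * s a) * (ε * s a) := by
      gcongr
      exact (norm_nonneg _).trans hQa
    _ = _ := by ring
  refine norm_le_mul_norm_add_add (P a) (R a) (κ_le.trans_lt hκ) (hQa.trans ?_) hwu
  calc 1 + b * s a
      ≤ (1 + β * s a) * (1 - (C ^ 2 * s a + (1 + b * s a) * ε) * s a) := by
        linear_combination mul_le_mul_of_nonneg_right hdefect.le (hs0 a)
    _ ≤ _ := by gcongr

end PerturbedIdentity

section Constants

lemma eventually_mem_Vrho {E : Type*} [NormedAddCommGroup E] {V : Set E} {ρ : ℝ} (hρ : 0 < ρ) :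
    ∀ᶠ x in 𝓝[V] 0, x ∈ Vrho V ρ :=
  inter_mem self_mem_nhdsWithin (mem_nhdsWithin_of_mem_nhds (ball_mem_nhds 0 hρ))

lemma BigOOn.isBigO_nhdsWithin {E G : Type*} [NormedAddCommGroup E] [NormedAddCommGroup G]
    {h : E → G} {V : Set E} {ρ : ℝ} {k : ℕ} (hρ : 0 < ρ) (hh : BigOOn h (Vrho V ρ) k) :
    h =O[𝓝[V] 0] fun x => ‖x‖ ^ k := by
  obtain ⟨C, hC⟩ := hh
  refine .of_bound C ((eventually_mem_Vrho hρ).mono fun x hx => ?_)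
  simpa using hC x hx

lemma exists_forall_mem_Vrho_of_eventually {E : Type*} [NormedAddCommGroup E] {V : Set E}
    {ρ₀ : ℝ} (hρ₀ : 0 < ρ₀) {P : E → Prop} (hP : ∀ᶠ x in 𝓝[V] 0, P x) :
    ∃ ρ > 0, ρ ≤ ρ₀ ∧ ∀ x ∈ Vrho V ρ, P x := by
  obtain ⟨ε, hε, hball⟩ := Metric.mem_nhdsWithin_iff.1 hP
  exact ⟨min ρ₀ ε, lt_min hρ₀ hε, min_le_left _ _, fun x hx =>
    hball ⟨ball_subset_ball (min_le_right _ _) hx.2, hx.1⟩⟩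

variable {E F : Type*} [NormedAddCommGroup E] [NormedSpace ℝ E]
  [NormedAddCommGroup F] [NormedSpace ℝ F] {p : E × F → E} {q : E × F → F}
  {V : Set E} {ρ : ℝ} {N M : ℕ} {x : E}

lemma fderiv_comp_prodMk_left {G : Type*} [NormedAddCommGroup G] [NormedSpace ℝ G]
    {g : E × F → G} {y : F} (hg : DifferentiableAt ℝ g (x, y)) :
    fderiv ℝ (fun z => g (z, y)) x = (fderiv ℝ g (x, y)).comp (.inl ℝ E F) :=
  (hg.hasFDerivAt.comp x (hasFDerivAt_prodMk_left x y)).fderiv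

lemma fderiv_comp_prodMk_right {G : Type*} [NormedAddCommGroup G] [NormedSpace ℝ G]
    {g : E × F → G} {y : F} (hg : DifferentiableAt ℝ g (x, y)) :
    fderiv ℝ (fun z => g (x, z)) y = (fderiv ℝ g (x, y)).comp (.inr ℝ E F) :=
  (hg.hasFDerivAt.comp y (hasFDerivAt_prodMk_right x y)).fderiv

lemma fderiv_fst_eq_zero_of_eq_zero (hV : IsOpen V) (hq : ∀ x ∈ Vrho V ρ, q (x, 0) = 0)
    (hx : x ∈ Vrho V ρ) : fderiv ℝ (fun z => q (z, 0)) x = 0 := by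
  have q_eq_zero : (fun z => q (z, 0)) =ᶠ[𝓝 x] fun _ => 0 := by
    filter_upwards [(hV.inter isOpen_ball).mem_nhds hx] with z hz using hq z hz
  rw [q_eq_zero.fderiv_eq, fderiv_const_apply]

lemma norm_id_sub_le_one_add_sSup_mul {X Y : Type*} [SeminormedAddCommGroup X]
    [NormedAddCommGroup Y] [NormedSpace ℝ Y] {S : Set X} {D : X → Y →L[ℝ] Y} {C : ℝ} {k : ℕ}
    (hC : 0 ≤ C) (hD : ∀ x, ‖D x‖ ≤ C * ‖x‖ ^ k) {x : X} (hx : x ∈ S) (hx0 : ‖x‖ ≠ 0) :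
    ‖.id ℝ Y - D x‖ ≤
      1 + sSup ((fun z => (‖.id ℝ Y - D z‖ - 1) / ‖z‖ ^ k) '' S) * ‖x‖ ^ k := by
  refine sub_le_iff_le_add'.1 (le_sSup_div_norm_pow_mul
    (f := fun z => ‖.id ℝ Y - D z‖ - 1) hC (fun z => ?_) hx hx0)
  have norm_id_le : ‖ContinuousLinearMap.id ℝ Y‖ ≤ 1 := ContinuousLinearMap.norm_id_le
  linarith [norm_sub_le (.id ℝ Y) (D z), hD z]

lemma norm_id_sub_fderiv_fst_le (hp : IsHomogPoly N p) (hx : x ∈ Vrho V ρ) (hx0 : x ≠ 0) :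
    ‖.id ℝ E - fderiv ℝ (fun z => p (z, 0)) x‖ ≤ 1 + BpC p V ρ N * ‖x‖ ^ (N - 1) := by
  obtain ⟨C, hC, hbound⟩ := (hp.comp_clm (.inl ℝ E F)).fderiv.exists_norm_le
  exact norm_id_sub_le_one_add_sSup_mul hC hbound hx (norm_ne_zero_iff.2 hx0)

lemma norm_id_sub_fderiv_snd_le (hq : IsHomogPoly M q) (hx : x ∈ Vrho V ρ) (hx0 : x ≠ 0) :
    ‖.id ℝ F - fderiv ℝ (fun y => q (x, y)) 0‖ ≤ 1 + -BqC q V ρ M * ‖x‖ ^ (M - 1) := by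
  have homog : IsHomogPoly (M - 1) fun x : E => fderiv ℝ (fun y => q (x, y)) 0 := by
    have hom := (hq.fderiv.comp_clm (.inl ℝ E F)).clm_comp
      ((ContinuousLinearMap.compL ℝ F (E × F) F).flip (.inr ℝ E F))
    refine cast (congrArg _ (funext fun x => ?_)) hom
    exact (fderiv_comp_prodMk_right (hq.differentiable (x, 0))).symm
  obtain ⟨C, hC, hbound⟩ := homog.exists_norm_le
  rw [BqC, neg_neg]
  exact norm_id_sub_le_one_add_sSup_mul hC hbound hx (norm_ne_zero_iff.2 hx0)

lemma norm_add_le_sub_apC_mul (hp : IsHomogPoly N p) (hx : x ∈ Vrho V ρ) (hx0 : x ≠ 0) :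
    ‖x + p (x, 0)‖ ≤ ‖x‖ - apC p V ρ N * ‖x‖ ^ N := by
  obtain ⟨C, hC, hbound⟩ := (hp.comp_clm (.inl ℝ E F)).exists_norm_le
  have := le_sSup_div_norm_pow_mul (f := fun z => ‖z + p (z, 0)‖ - ‖z‖) hC
    (fun z => (sub_le_iff_le_add'.2 (norm_add_le _ _)).trans (hbound z)) hx
    (norm_ne_zero_iff.2 hx0)
  rw [apC]
  linarith

/-- By Euler's identity, `(N + 1) x = N (x + p(x,0)) + (x - D_x p(x,0) x)`, where the first summand
contracts at rate `a_p` and the second expands at rate at most `B_p`. -/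
lemma mul_apC_le_BpC (hN : N ≠ 0) (hp : IsHomogPoly N p) (ha : apC p V ρ N ≠ 0) (hV : 0 ∉ V) :
    N * apC p V ρ N ≤ BpC p V ρ N := by
  obtain ⟨x, hx⟩ : (Vrho V ρ).Nonempty := nonempty_iff_ne_empty.2 fun hempty => ha <| by
    rw [apC, hempty, image_empty, Real.sSup_empty, neg_zero]
  have hx0 : x ≠ 0 := ne_of_mem_of_not_mem hx.1 hV
  set D := fderiv ℝ (fun z => p (z, 0)) x
  have euler : D x = (N : ℝ) • p (x, 0) := (hp.comp_clm (.inl ℝ E F)).fderiv_apply_self x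
  have split : ((N : ℝ) + 1) • x = (N : ℝ) • (x + p (x, 0)) + (.id ℝ E - D) x := by
    rw [sub_apply, euler, ContinuousLinearMap.id_apply]
    module
  have norm_le := calc ((N : ℝ) + 1) * ‖x‖
    _ = ‖((N : ℝ) + 1) • x‖ := by rw [norm_smul, Real.norm_of_nonneg (by positivity)]
    _ ≤ N * ‖x + p (x, 0)‖ + ‖.id ℝ E - D‖ * ‖x‖ := by
      rw [split]
      refine (norm_add_le _ _).trans (add_le_add ?_ (ContinuousLinearMap.le_opNorm _ _))
      rw [norm_smul, Real.norm_natCast]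
    _ ≤ N * (‖x‖ - apC p V ρ N * ‖x‖ ^ N) + (1 + BpC p V ρ N * ‖x‖ ^ (N - 1)) * ‖x‖ := by
      gcongr
      · exact norm_add_le_sub_apC_mul hp hx hx0
      · exact norm_id_sub_fderiv_fst_le hp hx hx0
  refine le_of_mul_le_mul_right ?_ (pow_pos (norm_pos_iff.2 hx0) N)
  linear_combination norm_le + BpC p V ρ N * pow_sub_one_mul hN ‖x‖

end Constants

section Scaling

variable {E F : Type*} [NormedAddCommGroup E] [NormedSpace ℝ E]
  [NormedAddCommGroup F] [NormedSpace ℝ F]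

/-- The scaling `scaleY δ` as a continuous linear map. -/
def scaleYL (E F : Type*) [NormedAddCommGroup E] [NormedSpace ℝ E]
    [NormedAddCommGroup F] [NormedSpace ℝ F] (δ : ℝ) : E × F →L[ℝ] E × F :=
  (ContinuousLinearMap.fst ℝ E F).prod (δ • ContinuousLinearMap.snd ℝ E F)

lemma scaleYL_apply (δ : ℝ) (z : E × F) : scaleYL E F δ z = scaleY δ z := rfl

lemma scaleYL_inv_comp_scaleYL {δ : ℝ} (hδ : δ ≠ 0) :
    (scaleYL E F δ⁻¹).comp (scaleYL E F δ) = 1 := by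
  ext z <;> simp [scaleYL, hδ]

lemma fderiv_scaleY_conj {T : E × F → E × F} {δ : ℝ} (hδ : δ ≠ 0) {z : E × F}
    (hT : DifferentiableAt ℝ T z) :
    fderiv ℝ (fun y => scaleY δ⁻¹ (T (scaleY δ y))) (scaleY δ⁻¹ z) =
      (scaleYL E F δ⁻¹).comp ((fderiv ℝ T z).comp (scaleYL E F δ)) := by
  have cancel : scaleYL E F δ (scaleY δ⁻¹ z) = z := by
    simp only [scaleYL_apply, scaleY, smul_inv_smul₀ hδ]
  refine ((scaleYL E F δ⁻¹).hasFDerivAt.comp (scaleY δ⁻¹ z)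
    (HasFDerivAt.comp (scaleY δ⁻¹ z) ?_ (scaleYL E F δ).hasFDerivAt)).fderiv
  rw [cancel]
  exact hT.hasFDerivAt

end Scaling

section Rows

variable {α E F : Type*} [NormedAddCommGroup E] [NormedSpace ℝ E]
  [NormedAddCommGroup F] [NormedSpace ℝ F] {l : Filter α} {s : α → ℝ}

lemma isBigO_comp_clm {X Y Z : Type*} [NormedAddCommGroup X] [NormedSpace ℝ X]
    [NormedAddCommGroup Y] [NormedSpace ℝ Y] [NormedAddCommGroup Z] [NormedSpace ℝ Z]
    (A : α → Y →L[ℝ] Z) (S : X →L[ℝ] Y) : (fun a => (A a).comp S) =O[l] A :=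
  ((ContinuousLinearMap.compL ℝ X Y Z).flip S).isBigO_comp A l

lemma apply_scaleY_eq_fst_add (D G : E × F →L[ℝ] E) (δ : ℝ) (w : E × F) :
    D (scaleY δ w) = w.1 + G.comp (.inl ℝ E F) w.1
      + (δ • G.comp ((ContinuousLinearMap.inr ℝ E F).comp (.snd ℝ E F))
        + (D - .fst ℝ E F - G).comp (scaleYL E F δ)) w := by
  have G_scale : G (scaleY δ w) = G (w.1, 0) + δ • G (0, w.2) := by
    rw [← map_smul, ← map_add]
    simp [scaleY]
  have D_scale : D (scaleY δ w) = w.1 + G (scaleY δ w)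
      + (D - .fst ℝ E F - G) (scaleYL E F δ w) := by simp [scaleYL_apply, scaleY]
  rw [D_scale, G_scale, ← add_assoc, add_assoc (w.1 + _)]
  rfl

lemma apply_scaleY_eq_snd_add {D G : E × F →L[ℝ] F} (hG : G.comp (.inl ℝ E F) = 0) {δ : ℝ}
    (hδ : δ ≠ 0) (w : E × F) :
    δ⁻¹ • D (scaleY δ w) = w.2 + G.comp (.inr ℝ E F) w.2
      + (δ⁻¹ • (D - .snd ℝ E F - G).comp (scaleYL E F δ)) w := by
  have G_scale : G (scaleY δ w) = δ • G (0, w.2) := by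
    have G_inl : G (w.1, 0) = 0 := DFunLike.congr_fun hG w.1
    rw [← zero_add (δ • _), ← G_inl, ← map_smul, ← map_add]
    simp [scaleY]
  have D_scale : D (scaleY δ w) = δ • w.2 + G (scaleY δ w)
      + (D - .snd ℝ E F - G) (scaleYL E F δ w) := by simp [scaleYL_apply, scaleY]
  rw [D_scale, G_scale, smul_add, smul_add, inv_smul_smul₀ hδ, inv_smul_smul₀ hδ]
  rfl

lemma exists_scale_eventually_norm_fst_le (hs : Tendsto s l (𝓝 0)) (hs0 : ∀ a, 0 ≤ s a)
    {D G : α → E × F →L[ℝ] E} (hG : G =O[l] s)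
    (hDG : (fun a => D a - .fst ℝ E F - G a) =o[l] s) {b β : ℝ} (hbβ : b < β)
    (hb : ∀ᶠ a in l, ‖.id ℝ E - (G a).comp (.inl ℝ E F)‖ ≤ 1 + b * s a) :
    ∃ δ > 0, ∀ᶠ a in l, ∀ w : E × F, ‖w.2‖ ≤ ‖w.1‖ →
      ‖w.1‖ ≤ (1 + β * s a) * ‖D a (scaleY δ w)‖ := by
  obtain ⟨C, hC⟩ := hG.bound
  obtain ⟨δ, hδ, hCδ⟩ := exists_pos_mul_lt (sub_pos.2 hbβ) C
  obtain ⟨ε, hε, hεβ⟩ := exists_between hCδ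
  refine ⟨δ, hδ, ?_⟩
  have remainder_isLittleO :
      (fun a => (D a - .fst ℝ E F - G a).comp (scaleYL E F δ)) =o[l] s :=
    (isBigO_comp_clm _ _).trans_isLittleO hDG
  have coupling_le : ∀ᶠ a in l,
      ‖δ • (G a).comp ((ContinuousLinearMap.inr ℝ E F).comp (.snd ℝ E F))
        + (D a - .fst ℝ E F - G a).comp (scaleYL E F δ)‖ ≤ ε * s a := by
    filter_upwards [hC, remainder_isLittleO.def (sub_pos.2 hε)] with a hGa hrem
    rw [Real.norm_of_nonneg (hs0 a)] at hGa hrem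
    have norm_G_comp_le :
        ‖(G a).comp ((ContinuousLinearMap.inr ℝ E F).comp (.snd ℝ E F))‖ ≤ ‖G a‖ := by
      refine ContinuousLinearMap.opNorm_le_bound _ (norm_nonneg _) fun w => ?_
      refine (G a).le_opNorm_of_le ?_
      simpa using norm_snd_le w
    calc _ ≤ δ * ‖G a‖ + (ε - C * δ) * s a := by
          refine (norm_add_le _ _).trans (add_le_add ?_ hrem)
          rw [norm_smul, Real.norm_of_nonneg hδ.le]
          gcongr
      _ ≤ δ * (C * s a) + (ε - C * δ) * s a := by gcongr
      _ = ε * s a := by ring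
  filter_upwards [eventually_norm_le_mul_norm_add_add hs hs0
    ((isBigO_comp_clm G (.inl ℝ E F)).trans hG) hb coupling_le
    (lt_sub_iff_add_lt'.1 hεβ)] with a ha w hw
  rw [apply_scaleY_eq_fst_add (D a) (G a)]
  exact ha w.1 w (max_le le_rfl hw)

lemma eventually_norm_snd_le (hs : Tendsto s l (𝓝 0)) (hs0 : ∀ a, 0 ≤ s a)
    {D G : α → E × F →L[ℝ] F} (hG : G =O[l] s)
    (hDG : (fun a => D a - .snd ℝ E F - G a) =o[l] s)
    (hG0 : ∀ᶠ a in l, (G a).comp (.inl ℝ E F) = 0) {b β : ℝ} (hbβ : b < β)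
    (hb : ∀ᶠ a in l, ‖.id ℝ F - (G a).comp (.inr ℝ E F)‖ ≤ 1 + b * s a) {δ : ℝ} (hδ : δ ≠ 0) :
    ∀ᶠ a in l, ∀ w : E × F, ‖w.1‖ ≤ ‖w.2‖ →
      ‖w.2‖ ≤ (1 + β * s a) * ‖δ⁻¹ • D a (scaleY δ w)‖ := by
  have remainder_isLittleO :
      (fun a => δ⁻¹ • (D a - .snd ℝ E F - G a).comp (scaleYL E F δ)) =o[l] s :=
    ((isBigO_comp_clm _ _).trans_isLittleO hDG).const_smul_left δ⁻¹
  obtain ⟨ε, hε, hεβ⟩ := exists_between (sub_pos.2 hbβ)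
  have coupling_le : ∀ᶠ a in l,
      ‖δ⁻¹ • (D a - .snd ℝ E F - G a).comp (scaleYL E F δ)‖ ≤ ε * s a := by
    simpa only [Real.norm_of_nonneg (hs0 _)] using remainder_isLittleO.def hε
  filter_upwards [hG0, eventually_norm_le_mul_norm_add_add hs hs0
    ((isBigO_comp_clm G (.inr ℝ E F)).trans hG) hb coupling_le (lt_sub_iff_add_lt'.1 hεβ)]
    with a hGa ha w hw
  rw [apply_scaleY_eq_snd_add hGa hδ]
  exact ha w.2 w (max_le hw le_rfl)

end Rows

section WeakExpansion

lemma norm_inverse_le_of_le_mul_norm {X : Type*} [NormedAddCommGroup X] [NormedSpace ℝ X]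
    {A : X →L[ℝ] X} (hA : IsUnit A) {c : ℝ} (hc : 0 ≤ c) (h : ∀ w, ‖w‖ ≤ c * ‖A w‖) :
    ‖A.inverse‖ ≤ c := by
  refine ContinuousLinearMap.opNorm_le_bound _ hc fun v => ?_
  have apply_inverse : A (A.inverse v) = v := by
    rw [← ContinuousLinearMap.ringInverse_eq_inverse]
    exact DFunLike.congr_fun (Ring.mul_inverse_cancel A hA) v
  simpa only [apply_inverse] using h (A.inverse v)

lemma norm_le_mul_norm_of_rows {E F : Type*} [SeminormedAddCommGroup E]
    [SeminormedAddCommGroup F] {A : E × F → E × F} {c : ℝ} (hc : 0 ≤ c) {w : E × F}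
    (hfst : ‖w.2‖ ≤ ‖w.1‖ → ‖w.1‖ ≤ c * ‖(A w).1‖)
    (hsnd : ‖w.1‖ ≤ ‖w.2‖ → ‖w.2‖ ≤ c * ‖(A w).2‖) :
    ‖w‖ ≤ c * ‖A w‖ := by
  rcases le_total ‖w.2‖ ‖w.1‖ with h | h
  · rw [Prod.norm_def, max_eq_left h]
    exact (hfst h).trans (by gcongr; exact norm_fst_le _)
  · rw [Prod.norm_def, max_eq_right h]
    exact (hsnd h).trans (by gcongr; exact norm_snd_le _)

variable {E F : Type*} [NormedAddCommGroup E] [NormedSpace ℝ E]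
  [NormedAddCommGroup F] [NormedSpace ℝ F]

variable {l : Filter E} {K : E → E × F}

lemma tendsto_inl_zero (hl : l ≤ 𝓝 0) : Tendsto (fun x : E => (x, (0 : F))) l (𝓝 0) :=
  ((ContinuousLinearMap.inl ℝ E F).continuous.tendsto' 0 0 (map_zero _)).mono_left hl

lemma tendsto_zero_of_isBigO_sub_inl (hl : l ≤ 𝓝 0)
    (hK : (fun x => K x - (x, 0)) =O[l] fun x => ‖x‖ ^ 2) : Tendsto K l (𝓝 0) := by
  have sub_tendsto := hK.trans_tendsto (tendsto_norm_pow_zero hl two_ne_zero)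
  simpa only [sub_add_cancel, add_zero] using sub_tendsto.add (tendsto_inl_zero hl)

lemma fderiv_sub_isLittleO_along {G : Type*} [NormedAddCommGroup G] [NormedSpace ℝ G]
    [CompleteSpace G] (hl : l ≤ 𝓝 0) (hK : (fun x => K x - (x, 0)) =O[l] fun x => ‖x‖ ^ 2)
    {f g : E × F → G} {k : ℕ} (hk : 2 ≤ k) (hf : AnalyticAt ℝ f 0) (hg : IsHomogPoly k g)
    (A : E × F →L[ℝ] G) (hO : (fun z => f z - A z - g z) =O[𝓝 0] fun z => ‖z‖ ^ (k + 1)) :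
    (fun x => fderiv ℝ f (K x) - A - fderiv ℝ g (x, 0)) =o[l] fun x => ‖x‖ ^ (k - 1) := by
  have remainder := fderiv_sub_isBigO_of_isBigO hk hf hg A hO (tendsto_inl_zero hl)
    (by simpa only [Prod.norm_mk, norm_zero, max_eq_left, norm_nonneg] using hK)
  simp only [Prod.norm_mk, norm_zero, max_eq_left, norm_nonneg] at remainder
  exact remainder.trans_isLittleO ((isLittleO_norm_pow_norm_pow (by lia)).mono hl)

lemma IsHomogPoly.fderiv_comp_inl_isBigO {G : Type*} [NormedAddCommGroup G] [NormedSpace ℝ G]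
    {g : E × F → G} {k : ℕ} (hg : IsHomogPoly k g) (l : Filter E) :
    (fun x => _root_.fderiv ℝ g (x, (0 : F))) =O[l] fun x => ‖x‖ ^ (k - 1) :=
  (hg.fderiv.comp_clm (.inl ℝ E F)).isBigO l

lemma exists_scale_eventually_norm_fst_fderiv_le [CompleteSpace E] (hl : l ≤ 𝓝 0)
    (hK : (fun x => K x - (x, 0)) =O[l] fun x => ‖x‖ ^ 2) {f p : E × F → E} {N : ℕ} (hN : 2 ≤ N)
    (hf : AnalyticAt ℝ f 0) (hp : IsHomogPoly N p)
    (hO : (fun z => f z - z.1 - p z) =O[𝓝 0] fun z => ‖z‖ ^ (N + 1)) {b β : ℝ} (hbβ : b < β)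
    (hb : ∀ᶠ x in l, ‖.id ℝ E - fderiv ℝ (fun z => p (z, 0)) x‖ ≤ 1 + b * ‖x‖ ^ (N - 1)) :
    ∃ δ > 0, ∀ᶠ x in l, ∀ w : E × F, ‖w.2‖ ≤ ‖w.1‖ →
      ‖w.1‖ ≤ (1 + β * ‖x‖ ^ (N - 1)) * ‖fderiv ℝ f (K x) (scaleY δ w)‖ := by
  refine exists_scale_eventually_norm_fst_le (tendsto_norm_pow_zero hl (by lia))
    (fun x => by positivity) (hp.fderiv_comp_inl_isBigO l)
    (fderiv_sub_isLittleO_along hl hK hN hf hp (.fst ℝ E F) hO) hbβ ?_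
  simpa only [fderiv_comp_prodMk_left (hp.differentiable _)] using hb

lemma eventually_norm_snd_fderiv_le [CompleteSpace F] (hl : l ≤ 𝓝 0)
    (hK : (fun x => K x - (x, 0)) =O[l] fun x => ‖x‖ ^ 2) {f q : E × F → F} {M : ℕ} (hM : 2 ≤ M)
    (hf : AnalyticAt ℝ f 0) (hq : IsHomogPoly M q)
    (hO : (fun z => f z - z.2 - q z) =O[𝓝 0] fun z => ‖z‖ ^ (M + 1))
    (hq0 : ∀ᶠ x in l, fderiv ℝ (fun z => q (z, 0)) x = 0) {b β : ℝ} (hbβ : b < β)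
    (hb : ∀ᶠ x in l, ‖.id ℝ F - fderiv ℝ (fun y => q (x, y)) 0‖ ≤ 1 + b * ‖x‖ ^ (M - 1))
    {δ : ℝ} (hδ : δ ≠ 0) :
    ∀ᶠ x in l, ∀ w : E × F, ‖w.1‖ ≤ ‖w.2‖ →
      ‖w.2‖ ≤ (1 + β * ‖x‖ ^ (M - 1)) * ‖δ⁻¹ • fderiv ℝ f (K x) (scaleY δ w)‖ := by
  refine eventually_norm_snd_le (tendsto_norm_pow_zero hl (by lia))
    (fun x => by positivity) (hq.fderiv_comp_inl_isBigO l)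
    (fderiv_sub_isLittleO_along hl hK hM hf hq (.snd ℝ E F) hO) ?_ hbβ ?_ hδ
  · simpa only [fderiv_comp_prodMk_left (hq.differentiable _)] using hq0
  · simpa only [fderiv_comp_prodMk_right (hq.differentiable _)] using hb

lemma eventually_norm_snd_fderiv_le_of_hypH2 [CompleteSpace F] {V : Set E} {ρ : ℝ} {N M : ℕ}
    {p : E × F → E} {f q : E × F → F} {B : ℝ} (hρ : 0 < ρ) (hVopen : IsOpen V) (hV0 : 0 ∉ V)
    (hK : (fun x => K x - (x, 0)) =O[𝓝[V] 0] fun x => ‖x‖ ^ 2) (hN : 2 ≤ N) (hM : 2 ≤ M)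
    (hf : AnalyticAt ℝ f 0) (hq : IsHomogPoly M q)
    (hO : (fun z => f z - z.2 - q z) =O[𝓝 0] fun z => ‖z‖ ^ (min N M + 1))
    (hH2 : HypH2 p q V ρ N M) (hB0 : 0 < B) (hB : N * apC p V ρ N ≤ B) {δ : ℝ} (hδ : δ ≠ 0) :
    ∀ᶠ x in 𝓝[V] 0, ∀ w : E × F, ‖w.1‖ ≤ ‖w.2‖ →
      ‖w.2‖ ≤ (1 + B * ‖x‖ ^ (N - 1)) * ‖δ⁻¹ • fderiv ℝ f (K x) (scaleY δ w)‖ := by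
  have hx_mem : ∀ᶠ x in 𝓝[V] (0 : E), x ∈ Vrho V ρ := eventually_mem_Vrho hρ
  have hq0 : ∀ᶠ x in 𝓝[V] (0 : E), fderiv ℝ (fun z => q (z, 0)) x = 0 :=
    hx_mem.mono fun x hx => fderiv_fst_eq_zero_of_eq_zero hVopen hH2.1 hx
  have hb : ∀ᶠ x in 𝓝[V] (0 : E), ‖.id ℝ F - fderiv ℝ (fun y => q (x, y)) 0‖ ≤
      1 + -BqC q V ρ M * ‖x‖ ^ (M - 1) :=
    hx_mem.mono fun x hx => norm_id_sub_fderiv_snd_le hq hx (ne_of_mem_of_not_mem hx.1 hV0)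
  rcases lt_trichotomy N M with hNM | rfl | hMN
  · have hO' : (fun z => f z - z.2 - 0) =O[𝓝 0] fun z => ‖z‖ ^ (N + 1) := by
      rw [min_eq_left hNM.le] at hO
      simpa using hO.add ((hq.isBigO (𝓝 0)).trans (norm_pow_isBigO_norm_pow hNM))
    refine eventually_norm_snd_fderiv_le nhdsWithin_le_nhds hK hN hf .zero hO' (by simp)
      hB0 (.of_forall fun x => ?_) hδ
    simpa using ContinuousLinearMap.norm_id_le
  · rw [min_self] at hO
    exact eventually_norm_snd_fderiv_le nhdsWithin_le_nhds hK hM hf hq hO hq0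
      (by linarith [hH2.2.2 rfl]) hb hδ
  · rw [min_eq_right hMN.le] at hO
    filter_upwards [eventually_norm_snd_fderiv_le nhdsWithin_le_nhds hK hM hf hq hO hq0
      (neg_lt_zero.2 (hH2.2.1 hMN)) hb hδ] with x hx w hw
    refine (hx w hw).trans ?_
    gcongr ?_ * _
    rw [zero_mul]
    linarith [show 0 ≤ B * ‖x‖ ^ (N - 1) by positivity]

lemma eventually_isUnit_and_norm_inverse_le [CompleteSpace E] [CompleteSpace F]
    {T : E × F → E × F} (hT : AnalyticAt ℝ T 0) (hT0 : fderiv ℝ T 0 = 1)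
    (hK : Tendsto K l (𝓝 0)) {δ : ℝ} (hδ : δ ≠ 0) {c : E → ℝ} (hc : ∀ x, 0 ≤ c x)
    (hfst : ∀ᶠ x in l, ∀ w : E × F, ‖w.2‖ ≤ ‖w.1‖ →
      ‖w.1‖ ≤ c x * ‖fderiv ℝ (fun z => (T z).1) (K x) (scaleY δ w)‖)
    (hsnd : ∀ᶠ x in l, ∀ w : E × F, ‖w.1‖ ≤ ‖w.2‖ →
      ‖w.2‖ ≤ c x * ‖δ⁻¹ • fderiv ℝ (fun z => (T z).2) (K x) (scaleY δ w)‖) :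
    ∀ᶠ x in l,
      IsUnit (fderiv ℝ (fun z => scaleY δ⁻¹ (T (scaleY δ z))) (scaleY δ⁻¹ (K x))) ∧
      ‖(fderiv ℝ (fun z => scaleY δ⁻¹ (T (scaleY δ z))) (scaleY δ⁻¹ (K x))).inverse‖ ≤ c x := by
  have conj_tendsto : Tendsto (fun x => (scaleYL E F δ⁻¹).comp
      ((fderiv ℝ T (K x)).comp (scaleYL E F δ))) l (𝓝 1) := by
    have conj_id : (scaleYL E F δ⁻¹).comp ((fderiv ℝ T 0).comp (scaleYL E F δ)) = 1 := by
      rw [hT0]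
      exact scaleYL_inv_comp_scaleYL hδ
    rw [← conj_id]
    have conj_continuous : Continuous fun A : E × F →L[ℝ] E × F =>
        (scaleYL E F δ⁻¹).comp (A.comp (scaleYL E F δ)) := by fun_prop
    exact (conj_continuous.tendsto _).comp (hT.fderiv.continuousAt.tendsto.comp hK)
  filter_upwards [hK.eventually hT.eventually_analyticAt,
    conj_tendsto.eventually (Units.isOpen.mem_nhds isUnit_one), hfst, hsnd]
    with x hTx hunit hfst hsnd
  have hTx := hTx.differentiableAt
  rw [fderiv_scaleY_conj hδ hTx]
  refine ⟨hunit, norm_inverse_le_of_le_mul_norm hunit (hc x) fun w =>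
    norm_le_mul_norm_of_rows (hc x) ?_ ?_⟩
  · have hfst := hfst w
    rwa [hTx.hasFDerivAt.fst.fderiv] at hfst
  · have hsnd := hsnd w
    rwa [hTx.hasFDerivAt.snd.fderiv] at hsnd

end WeakExpansion

section ParabolicMaps

variable {E F : Type*} [NormedAddCommGroup E] [NormedSpace ℝ E]
  [NormedAddCommGroup F] [NormedSpace ℝ F]

lemma isBigO_taylorPoly0_sub {X Y Z : Type*} [NormedAddCommGroup X] [NormedSpace ℝ X]
    [NormedAddCommGroup Y] [NormedSpace ℝ Y] [CompleteSpace Y]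
    [NormedAddCommGroup Z] [NormedSpace ℝ Z] {f : X → Y} {h : X → Z} {n k : ℕ}
    (hf : ContDiffAt ℝ (n + 1) f 0) (hkn : k ≤ n + 1) (L : Y →L[ℝ] Z)
    (hO : (fun z => L (f z) - h z) =O[𝓝 0] fun z => ‖z‖ ^ k) :
    (fun z => L (taylorPoly0 f n z) - h z) =O[𝓝 0] fun z => ‖z‖ ^ k := by
  have taylor_isBigO := (L.isBigO_comp (fun z => f z - taylorPoly0 f n z) (𝓝 0)).trans
    ((isBigO_sub_taylorPoly0 hf).trans (norm_pow_isBigO_norm_pow hkn))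
  refine (hO.sub taylor_isBigO).congr_left fun z => ?_
  rw [map_sub]
  abel

lemma fderiv_eq_one_of_isBigO {X : Type*} [NormedAddCommGroup X] [NormedSpace ℝ X] {T : X → X}
    (hT : (fun z => T z - z) =O[𝓝 0] fun z => ‖z‖ ^ 2) : fderiv ℝ T 0 = 1 := by
  have sub_hasFDerivAt : HasFDerivAt (fun z => T z - z) (0 : X →L[ℝ] X) 0 :=
    IsBigO.hasFDerivAt (by simpa only [sub_zero] using hT) one_lt_two
  have T_hasFDerivAt : HasFDerivAt T (0 + 1) 0 :=
    (sub_hasFDerivAt.add (hasFDerivAt_id 0)).congr_of_eventuallyEq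
      (.of_forall fun z => (sub_add_cancel (T z) z).symm)
  rw [T_hasFDerivAt.fderiv, zero_add]

namespace ParabolicForm

variable {U : Set (E × F)} {Fm : E × F → E × F} {p : E × F → E} {q : E × F → F} {N M n : ℕ}

lemma sub_id_isBigO (hpar : ParabolicForm U Fm p q N M) (hU : U ∈ 𝓝 0) :
    (fun z => Fm z - z) =O[𝓝 0] fun z => ‖z‖ ^ 2 := by
  obtain ⟨hN, hM, hp, hq, hfst, hsnd⟩ := hpar
  rw [nhdsWithin_eq_nhds.2 hU] at hfst hsnd
  refine IsBigO.prod_left ?_ ?_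
  · simpa using (hfst.trans (norm_pow_isBigO_norm_pow (by lia))).add
      ((hp.isBigO _).trans (norm_pow_isBigO_norm_pow hN))
  · simpa using (hsnd.trans (norm_pow_isBigO_norm_pow (by lia))).add
      ((hq.isBigO _).trans (norm_pow_isBigO_norm_pow hM))

variable [CompleteSpace E] [CompleteSpace F]

lemma fderiv_taylorPoly0 (hpar : ParabolicForm U Fm p q N M) (hU : U ∈ 𝓝 0)
    (hFm : ContDiffAt ℝ (n + 1) Fm 0) (hn : 1 ≤ n) : fderiv ℝ (taylorPoly0 Fm n) 0 = 1 :=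
  fderiv_eq_one_of_isBigO <|
    isBigO_taylorPoly0_sub hFm (by lia) (.id ℝ _) (hpar.sub_id_isBigO hU)

lemma taylorPoly0_fst_isBigO (hpar : ParabolicForm U Fm p q N M) (hU : U ∈ 𝓝 0)
    (hFm : ContDiffAt ℝ (n + 1) Fm 0) (hn : N ≤ n) :
    (fun z => (taylorPoly0 Fm n z).1 - z.1 - p z) =O[𝓝 0] fun z => ‖z‖ ^ (N + 1) := by
  obtain ⟨-, -, -, -, hfst, -⟩ := hpar
  simp only [sub_sub, nhdsWithin_eq_nhds.2 hU] at hfst ⊢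
  exact isBigO_taylorPoly0_sub hFm (by lia) (.fst ℝ E F) hfst

lemma taylorPoly0_snd_isBigO (hpar : ParabolicForm U Fm p q N M) (hU : U ∈ 𝓝 0)
    (hFm : ContDiffAt ℝ (n + 1) Fm 0) {k : ℕ} (hkn : k ≤ n) (hkM : k ≤ M) :
    (fun z => (taylorPoly0 Fm n z).2 - z.2 - q z) =O[𝓝 0] fun z => ‖z‖ ^ (k + 1) := by
  obtain ⟨-, -, -, -, -, hsnd⟩ := hpar
  simp only [sub_sub, nhdsWithin_eq_nhds.2 hU] at hsnd ⊢
  exact isBigO_taylorPoly0_sub hFm (by lia) (.snd ℝ E F)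
    (hsnd.trans (norm_pow_isBigO_norm_pow (by lia)))

end ParabolicForm

theorem scaled_weak_expansion_estimate_general [CompleteSpace E] [CompleteSpace F]
    {U : Set (E × F)} (hU : U ∈ 𝓝 0) {Fm : E × F → E × F} {p : E × F → E} {q : E × F → F}
    {N M : ℕ} (hpar : ParabolicForm U Fm p q N M)
    {ℓ : ℕ} (hℓ : N < ℓ) (hFsmooth : ContDiffAt ℝ ℓ Fm 0)
    {V : Set E} (hVopen : IsOpen V) (hV0 : 0 ∉ V) {ρ₀ : ℝ} (hρ₀ : 0 < ρ₀)
    (hH1 : HypH1 p V ρ₀ N) (hH2 : HypH2 p q V ρ₀ N M) {Kle : E → E × F}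
    (hKleOrd : BigOOn (fun x => Kle x - (x, 0)) (Vrho V ρ₀) 2)
    {B : ℝ} (hB : BpC p V ρ₀ N < B) :
    ∃ ρ > (0 : ℝ), ρ ≤ ρ₀ ∧ ∃ δ > (0 : ℝ), ∀ x ∈ Vrho V ρ,
      IsUnit (fderiv ℝ
        (fun z => scaleY δ⁻¹ (taylorPoly0 Fm (ℓ - 1) (scaleY δ z))) (scaleY δ⁻¹ (Kle x))) ∧
      ‖(fderiv ℝ (fun z => scaleY δ⁻¹ (taylorPoly0 Fm (ℓ - 1) (scaleY δ z)))
          (scaleY δ⁻¹ (Kle x))).inverse‖ ≤ 1 + B * ‖x‖ ^ (N - 1) := by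
  obtain ⟨n, rfl⟩ : ∃ n, ℓ = n + 1 := ⟨ℓ - 1, by lia⟩
  have ⟨hN, hM, hp, hq, _⟩ := hpar
  have analytic : AnalyticAt ℝ (taylorPoly0 Fm n) 0 :=
    (contDiff_taylorPoly0 Fm n).contDiffAt.analyticAt
  have hK := hKleOrd.isBigO_nhdsWithin (k := 2) hρ₀
  have apC_le := mul_apC_le_BpC (by lia) hp hH1.ne' hV0
  have B_pos : 0 < B := (mul_pos (by positivity) hH1).trans_le apC_le |>.trans hB
  obtain ⟨δ, hδ, hfst⟩ := exists_scale_eventually_norm_fst_fderiv_le nhdsWithin_le_nhds hK hN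
    (analyticAt_fst.comp analytic) hp (hpar.taylorPoly0_fst_isBigO hU hFsmooth (by lia)) hB <|
    (eventually_mem_Vrho hρ₀).mono fun x hx =>
      norm_id_sub_fderiv_fst_le hp hx (ne_of_mem_of_not_mem hx.1 hV0)
  have hsnd := eventually_norm_snd_fderiv_le_of_hypH2 hρ₀ hVopen hV0 hK hN hM
    (analyticAt_snd.comp analytic) hq
    (hpar.taylorPoly0_snd_isBigO hU hFsmooth (by lia) (min_le_right _ _)) hH2 B_pos
    (apC_le.trans hB.le) hδ.ne'
  obtain ⟨ρ, hρ, hρ_le, hbound⟩ := exists_forall_mem_Vrho_of_eventually hρ₀ <|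
    eventually_isUnit_and_norm_inverse_le analytic
      (hpar.fderiv_taylorPoly0 hU hFsmooth (by lia))
      (tendsto_zero_of_isBigO_sub_inl nhdsWithin_le_nhds hK) hδ.ne'
      (fun x => by positivity) hfst hsnd
  exact ⟨ρ, hρ, hρ_le, δ, hδ, hbound⟩

end ParabolicMaps

/-- Lemma 6.4: after the scaling `S_δ(x,y) = (x, δy)`, the inverse of the
differential of the Taylor polynomial `P` of `F` along the approximate parametrization is
a weak expansion: `‖(DP̃)⁻¹(K̃^≤(x))‖ ≤ 1 + B‖x‖^{N-1}`. -/
theorem scaled_weak_expansion_estimate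
    {E F : Type*} [NormedAddCommGroup E] [NormedSpace ℝ E] [FiniteDimensional ℝ E]
    [NormedAddCommGroup F] [NormedSpace ℝ F] [FiniteDimensional ℝ F]
    (U : Set (E × F)) (hUopen : IsOpen U) (hU0 : (0 : E × F) ∈ U)
    (Fm : E × F → E × F) (p : E × F → E) (q : E × F → F) (N M : ℕ)
    (hpar : ParabolicForm U Fm p q N M)
    (r : ℕ∞) (hFsmooth : ContDiffOn ℝ r Fm U)
    (V : Set E) (hVopen : IsOpen V) (hVstar : StarShaped0 V)
    (ρ₀ : ℝ) (hρ₀ : 0 < ρ₀)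
    (hH1 : HypH1 p V ρ₀ N) (hH2 : HypH2 p q V ρ₀ N M) (hH3 : HypH3 p V ρ₀ N)
    (ℓ : ℕ) (hℓlow : ell0C p V ρ₀ N M < (ℓ : ℝ)) (hℓr : (ℓ : ℕ∞) ≤ r)
    (Kle : E → E × F) (hKleU : MapsTo Kle (Vrho V ρ₀) U)
    (hKleSm : ContDiffOn ℝ 1 Kle (Vrho V ρ₀))
    (hKleOrd : BigOOn (fun x => Kle x - (x, 0)) (Vrho V ρ₀) 2) :
    ∀ B : ℝ, BpC p V ρ₀ N < B →
      ∃ ρ > (0 : ℝ), ρ ≤ ρ₀ ∧ ∃ δ > (0 : ℝ), ∀ x ∈ Vrho V ρ,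
        IsUnit (fderiv ℝ
          (fun z => scaleY δ⁻¹ (taylorPoly0 Fm (ℓ - 1) (scaleY δ z)))
          (scaleY δ⁻¹ (Kle x))) ∧
        ‖(fderiv ℝ (fun z => scaleY δ⁻¹ (taylorPoly0 Fm (ℓ - 1) (scaleY δ z)))
            (scaleY δ⁻¹ (Kle x))).inverse‖ ≤ 1 + B * ‖x‖ ^ (N - 1) := by
  intro B hB
  have hV0 : 0 ∉ V := (hVopen.frontier_eq ▸ hVstar.1).2
  have hN : 2 ≤ N := hpar.1
  have ratio_ge : (N : ℝ) ≤ BpC p V ρ₀ N / apC p V ρ₀ N :=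
    (le_div_iff₀ hH1).2 (mul_apC_le_BpC (by lia) hpar.2.2.1 hH1.ne' hV0)
  have hℓ : N < ℓ := by
    rw [ell0C] at hℓlow
    have two_le_N : (2 : ℝ) ≤ N := mod_cast hN
    rify
    linarith [le_max_right (etaC N M - ApC p V ρ₀ N / dpC p V ρ₀ N) 0]
  have := FiniteDimensional.complete ℝ E
  have := FiniteDimensional.complete ℝ F
  exact scaled_weak_expansion_estimate_general (hUopen.mem_nhds hU0) hpar hℓ
    ((hFsmooth.of_le (mod_cast hℓr)).contDiffAt (hUopen.mem_nhds hU0)) hVopen hV0 hρ₀ hH1 hH2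
    hKleOrd hB
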